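/- arXiv:1211.0466 — 2 statements merged into one kernel-verified Lean document; each statement's English description precedes it below -/
import Mathlib

section
/- Fix N ∈ ℕ. Let g_n, g ∈ S^N(ν_T) be such that for every continuous compactly supported function f : [0,T] × 𝕏 → ℝ one has ∫ f·g_n dν_T → ∫ f·g dν_T as n → ∞. Let h : [0,T] × 𝕏 → ℝ be measurable with ∫ |h|² dν_T < ∞ and such that for every δ > 0 and every measurable set E ⊆ [0,T] × 𝕏 with ν_T(E) < ∞ one has ∫_E exp(δ·|h|) dν_T < ∞. Then ∫ h(s,v)·(g_n(s,v) − 1) ν_T(ds dv) → ∫ h(s,v)·(g(s,v) − 1) ν_T(ds dv) as n → ∞. -/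
/-!
The function `φ(x) = eˣ - 1 - x` is the supremum over `b ≥ 0` of `x * (b - 1) - l(b)`, and `φ(-x) ≤ φ(x)`
for `x ≥ 0`. Hence `|x| * |b - 1| ≤ l(b) + φ(|x|)` for all `b ≥ 0` (`abs_mul_abs_sub_one_le`).
Applying it to `c * u` and dividing by `c` yields, for every
`G ∈ S^N(μ)`,

  `∫ |u| * |G - 1| dμ ≤ (N + ∫ φ(c * |u|) dμ) / c`     (`MemSN.lintegral_mul_le`).

The bound is uniform over `S^N(μ)`, and it is small as soon as `c` is large and
`∫ φ(c * |u|) dμ ≤ 1`. The assumptions on `h` imply `∫ φ(c * |h|) dμ < ∞` for every `c > 0`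
(`lintegral_phi_lt_top`): `φ` is quadratic near `0`, and `{|h| ≥ 1}` has finite measure, where the
exponential moments apply. Hence, in this Orlicz sense, `h` is approximated by its truncations
(dominated convergence), and these, being bounded and in `L²`, by continuous compactly supported
functions. This reduces the theorem to continuous compactly supported `h`, for which it is the
assumed convergence.
-/

open MeasureTheory Filter
open scoped ENNReal

/-- `l(r) = r·log r − r + 1` (with `l 0 = 1`, since `Real.log 0 = 0`). -/
noncomputable def ell (r : ℝ) : ℝ := r * Real.log r - r + 1

/-- `g ∈ S^N(μ)`: `g` is measurable, nonnegative, and `∫ l(g) dμ ≤ N`. -/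
def MemSN {α : Type*} [MeasurableSpace α] (μ : Measure α) (N : ℕ) (g : α → ℝ) : Prop :=
  Measurable g ∧ (∀ p, 0 ≤ g p) ∧ ∫⁻ p, ENNReal.ofReal (ell (g p)) ∂μ ≤ N

/-! ### Young's inequality for `l` -/

/-- The function `φ(x) = eˣ - 1 - x`, the convex conjugate of `r ↦ l(1 + r)`. -/
noncomputable def phi (x : ℝ) : ℝ := Real.exp x - 1 - x

lemma measurable_phi : Measurable phi := by unfold phi; fun_prop

lemma phi_nonneg (x : ℝ) : 0 ≤ phi x := by
  have := Real.add_one_le_exp x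
  unfold phi; linarith

lemma phi_zero : phi 0 = 0 := by simp [phi]

lemma phi_neg_le {x : ℝ} (hx : 0 ≤ x) : phi (-x) ≤ phi x := by
  have h1 := Real.self_le_sinh_iff.2 hx
  rw [Real.sinh_eq] at h1
  unfold phi; linarith

lemma phi_le_sq_mul_exp {x : ℝ} (hx : 0 ≤ x) : phi x ≤ x ^ 2 * Real.exp x := by
  have h1 : Real.exp x - 1 ≤ x * Real.exp x := by
    have h2 := mul_le_mul_of_nonneg_right (Real.add_one_le_exp (-x)) (Real.exp_pos x).le
    rw [← Real.exp_add] at h2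
    simp only [neg_add_cancel, Real.exp_zero] at h2
    linarith
  have h3 := mul_le_mul_of_nonneg_left h1 hx
  have h4 : 0 ≤ x * (Real.exp x - 1) - phi x := by
    have : x * (Real.exp x - 1) - phi x = x * Real.exp x - (Real.exp x - 1) := by
      unfold phi; ring
    linarith
  nlinarith

lemma mul_sub_one_le (t : ℝ) {b : ℝ} (hb : 0 ≤ b) : t * (b - 1) ≤ ell b + phi t := by
  have key : t * b ≤ Real.exp t + b * Real.log b - b := by
    rcases hb.eq_or_lt with rfl | hb
    · simpa using (Real.exp_pos t).le
    · have h1 := mul_le_mul_of_nonneg_right (Real.add_one_le_exp (t - Real.log b)) hb.le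
      rw [Real.exp_sub, Real.exp_log hb, div_mul_cancel₀ _ hb.ne'] at h1
      linarith
  unfold ell phi; linarith

/-- Young's inequality for the pair `l`, `φ`. -/
lemma abs_mul_abs_sub_one_le (x : ℝ) {b : ℝ} (hb : 0 ≤ b) :
    |x| * |b - 1| ≤ ell b + phi |x| := by
  rcases le_total 0 (b - 1) with h1 | h1
  · rw [abs_of_nonneg h1]; exact mul_sub_one_le _ hb
  · rw [abs_of_nonpos h1]
    have h2 := mul_sub_one_le (-|x|) hb
    have h3 := phi_neg_le (abs_nonneg x)
    linarith

lemma ell_nonneg {b : ℝ} (hb : 0 ≤ b) : 0 ≤ ell b := by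
  have := mul_sub_one_le 0 hb
  simpa [phi_zero] using this

/-! ### Uniform estimates and truncation -/

section General

variable {α : Type*} [MeasurableSpace α] {μ : Measure α} {N : ℕ} {G : α → ℝ}

/-- The Orlicz-type estimate that is uniform over `S^N(μ)`. -/
lemma MemSN.lintegral_mul_le (hG : MemSN μ N G) (u : α → ℝ) {c : ℝ} (hc : 0 < c) :
    ∫⁻ p, ENNReal.ofReal (|u p| * |G p - 1|) ∂μ ≤
      ENNReal.ofReal c⁻¹ * (N + ∫⁻ p, ENNReal.ofReal (phi (c * |u p|)) ∂μ) := by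
  obtain ⟨hGm, hG0, hGN⟩ := hG
  have hem : Measurable fun p => ENNReal.ofReal (ell (G p)) := by
    unfold ell; fun_prop
  calc ∫⁻ p, ENNReal.ofReal (|u p| * |G p - 1|) ∂μ
      ≤ ∫⁻ p, ENNReal.ofReal c⁻¹ *
          (ENNReal.ofReal (ell (G p)) + ENNReal.ofReal (phi (c * |u p|))) ∂μ := by
        refine lintegral_mono fun p => ?_
        rw [← ENNReal.ofReal_add (ell_nonneg (hG0 p)) (phi_nonneg _),
          ← ENNReal.ofReal_mul (by positivity)]
        refine ENNReal.ofReal_le_ofReal ?_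
        have h1 := abs_mul_abs_sub_one_le (c * u p) (hG0 p)
        rw [abs_mul, abs_of_pos hc] at h1
        rw [inv_mul_eq_div, le_div_iff₀ hc]
        linarith
    _ = ENNReal.ofReal c⁻¹ * (∫⁻ p, ENNReal.ofReal (ell (G p)) ∂μ +
          ∫⁻ p, ENNReal.ofReal (phi (c * |u p|)) ∂μ) := by
        rw [lintegral_const_mul' _ _ ENNReal.ofReal_ne_top, lintegral_add_left hem]
    _ ≤ _ := by gcongr

/-- `φ(c * |h|)` is integrable: on `{|h| ≥ 1}`, which has finite measure by Chebyshev's inequality,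
the exponential moments bound it; elsewhere `φ(c * |h|) ≤ c² eᶜ h²`. -/
lemma lintegral_phi_lt_top {h : α → ℝ} (hmeas : Measurable h)
    (hL2 : ∫⁻ p, ENNReal.ofReal (|h p| ^ 2) ∂μ < ⊤)
    (hexp : ∀ δ : ℝ, 0 < δ → ∀ E : Set α, MeasurableSet E → μ E < ⊤ →
      ∫⁻ p in E, ENNReal.ofReal (Real.exp (δ * |h p|)) ∂μ < ⊤) {c : ℝ} (hc : 0 < c) :
    ∫⁻ p, ENNReal.ofReal (phi (c * |h p|)) ∂μ < ⊤ := by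
  set E : Set α := {p | 1 ≤ |h p|} with hE
  have hEm : MeasurableSet E := measurableSet_le measurable_const (by fun_prop)
  have hEfin : μ E < ⊤ := by
    refine lt_of_le_of_lt ?_ hL2
    rw [← lintegral_indicator_one hEm]
    refine lintegral_mono fun p => ?_
    by_cases hp : p ∈ E
    · have hp' : 1 ≤ |h p| := hp
      rw [Set.indicator_of_mem hp, Pi.one_apply, ← ENNReal.ofReal_one]
      exact ENNReal.ofReal_le_ofReal (by nlinarith)
    · simp [hp]
  rw [← lintegral_add_compl _ hEm]
  refine ENNReal.add_lt_top.2 ⟨?_, ?_⟩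
  · refine lt_of_le_of_lt (lintegral_mono fun p => ?_) (hexp c hc E hEm hEfin)
    refine ENNReal.ofReal_le_ofReal ?_
    have : 0 ≤ c * |h p| := by positivity
    unfold phi; linarith
  · calc ∫⁻ p in Eᶜ, ENNReal.ofReal (phi (c * |h p|)) ∂μ
        ≤ ∫⁻ p in Eᶜ, ENNReal.ofReal (c ^ 2 * Real.exp c) * ENNReal.ofReal (|h p| ^ 2) ∂μ := by
          refine setLIntegral_mono' hEm.compl fun p hp => ?_
          have hp' : |h p| < 1 := not_le.1 hp
          rw [← ENNReal.ofReal_mul (by positivity)]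
          refine ENNReal.ofReal_le_ofReal ?_
          calc phi (c * |h p|) ≤ (c * |h p|) ^ 2 * Real.exp (c * |h p|) :=
                phi_le_sq_mul_exp (by positivity)
            _ ≤ (c * |h p|) ^ 2 * Real.exp c := by
                gcongr
                nlinarith
            _ = _ := by ring
      _ ≤ ENNReal.ofReal (c ^ 2 * Real.exp c) * ∫⁻ p, ENNReal.ofReal (|h p| ^ 2) ∂μ := by
          rw [lintegral_const_mul' _ _ ENNReal.ofReal_ne_top]
          gcongr
          exact Measure.restrict_le_self
      _ < ⊤ := ENNReal.mul_lt_top ENNReal.ofReal_lt_top hL2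

/-- Truncations of `h` approximate `h` in the sense of `φ`, by dominated convergence: the error
`φ(c * |h|)` is supported on `{|h| > M}`. -/
lemma exists_truncation {h : α → ℝ} (hmeas : Measurable h) {c : ℝ}
    (hfin : ∫⁻ p, ENNReal.ofReal (phi (c * |h p|)) ∂μ < ⊤) :
    ∃ M : ℕ, ∫⁻ p, ENNReal.ofReal
      (phi (c * |h p - {q | |h q| ≤ M}.indicator h p|)) ∂μ ≤ 1 := by
  have hm : ∀ M : ℕ, MeasurableSet {q | |h q| ≤ (M : ℝ)} := fun M =>
    measurableSet_le (by fun_prop) measurable_const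
  have hlim := tendsto_lintegral_of_dominated_convergence (μ := μ)
    (F := fun M : ℕ => fun p => ENNReal.ofReal
      (phi (c * |h p - {q | |h q| ≤ (M : ℝ)}.indicator h p|))) (f := fun _ => 0)
    (fun p => ENNReal.ofReal (phi (c * |h p|)))
    (fun M => by
      have h1 : Measurable ({q | |h q| ≤ (M : ℝ)}.indicator h) := hmeas.indicator (hm M)
      have := measurable_phi
      fun_prop)
    (fun M => ae_of_all _ fun p => by
      refine ENNReal.ofReal_le_ofReal ?_
      by_cases hp : p ∈ {q | |h q| ≤ (M : ℝ)}
      · rw [Set.indicator_of_mem hp, sub_self, abs_zero, mul_zero, phi_zero]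
        exact phi_nonneg _
      · rw [Set.indicator_of_notMem hp, sub_zero])
    hfin.ne
    (ae_of_all _ fun p => by
      refine tendsto_const_nhds.congr' ?_
      obtain ⟨K, hK⟩ := exists_nat_ge |h p|
      filter_upwards [eventually_ge_atTop K] with M hM
      have hp : p ∈ {q | |h q| ≤ (M : ℝ)} := hK.trans (by exact_mod_cast hM)
      rw [Set.indicator_of_mem hp, sub_self, abs_zero, mul_zero, phi_zero, ENNReal.ofReal_zero])
  rw [lintegral_zero] at hlim
  exact (hlim.eventually_le_const zero_lt_one).exists

/-! ### Approximation by continuous compactly supported functions -/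

variable [TopologicalSpace α] [NormalSpace α] [R1Space α] [WeaklyLocallyCompactSpace α]
  [BorelSpace α] [μ.Regular]

/-- A bounded square-integrable function is approximated by continuous compactly supported
functions in the sense of `φ`: a compactly supported `L²` approximation clipped at the bound of the
function works, because `φ` is dominated by a multiple of the square on bounded sets. -/
lemma exists_compactSupport_approx {k : α → ℝ} (hk : MemLp k 2 μ) {M : ℝ}
    (hkM : ∀ p, |k p| ≤ M) {c : ℝ} (hc : 0 < c) :
    ∃ f : α → ℝ, Continuous f ∧ HasCompactSupport f ∧
      ∫⁻ p, ENNReal.ofReal (phi (c * |k p - f p|)) ∂μ ≤ 1 := by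
  rcases isEmpty_or_nonempty α with hα | ⟨⟨p₀⟩⟩
  · exact ⟨fun _ => 0, continuous_const, HasCompactSupport.zero, by simp⟩
  have hM : 0 ≤ M := (abs_nonneg _).trans (hkM p₀)
  -- The radius is chosen so that `(c * exp (c * M) * s) ^ 2 = 1` in the last step.
  set s : ℝ := (c * Real.exp (c * M))⁻¹ with hs
  have hs0 : 0 < s := by positivity
  obtain ⟨f₀, hf₀s, hf₀, hf₀c, -⟩ := hk.exists_hasCompactSupport_eLpNorm_sub_le
    (by norm_num) (ε := ENNReal.ofReal s) (by simpa using hs0)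
  have hsq : ∫⁻ p, ENNReal.ofReal (|k p - f₀ p| ^ 2) ∂μ ≤ ENNReal.ofReal (s ^ 2) := by
    have h1 := eLpNorm_nnreal_pow_eq_lintegral (f := k - f₀) (μ := μ) (p := 2) (by norm_num)
    have h2 : ∫⁻ p, ENNReal.ofReal (|k p - f₀ p| ^ 2) ∂μ =
        ∫⁻ p, ‖(k - f₀) p‖ₑ ^ (((2 : NNReal) : ℝ)) ∂μ := by
      refine lintegral_congr fun p => ?_
      rw [ENNReal.ofReal_pow (abs_nonneg _), Pi.sub_apply, Real.enorm_eq_ofReal_abs]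
      norm_num
    rw [h2, ← h1, ENNReal.ofReal_pow hs0.le, ← ENNReal.rpow_natCast]
    exact ENNReal.rpow_le_rpow (by simpa using hf₀) (by norm_num)
  refine ⟨fun p => max (-M) (min (f₀ p) M), by fun_prop,
    hf₀s.comp_left (g := fun x => max (-M) (min x M)) (by simp [hM]), ?_⟩
  calc ∫⁻ p, ENNReal.ofReal (phi (c * |k p - max (-M) (min (f₀ p) M)|)) ∂μ
      ≤ ∫⁻ p, ENNReal.ofReal (s⁻¹ ^ 2) * ENNReal.ofReal (|k p - f₀ p| ^ 2) ∂μ := by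
        refine lintegral_mono fun p => ?_
        rw [← ENNReal.ofReal_mul (by positivity)]
        refine ENNReal.ofReal_le_ofReal ?_
        obtain ⟨hk1, hk2⟩ := abs_le.1 (hkM p)
        have hd1 : |k p - max (-M) (min (f₀ p) M)| ≤ |k p - f₀ p| := by
          have : k p = max (-M) (min (k p) M) := by
            rw [min_eq_left hk2, max_eq_right hk1]
          conv_lhs => rw [this]
          exact (abs_max_sub_max_le_max _ _ _ _).trans (by
            simpa using (abs_min_sub_min_le_max (k p) M (f₀ p) M))
        have hd2 : |k p - max (-M) (min (f₀ p) M)| ≤ 2 * M := by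
          have h1 : -M ≤ max (-M) (min (f₀ p) M) := le_max_left _ _
          have h2 : max (-M) (min (f₀ p) M) ≤ M := max_le (by linarith) (min_le_right _ _)
          rw [abs_le]; constructor <;> linarith
        calc phi (c * |k p - max (-M) (min (f₀ p) M)|)
            ≤ (c * |k p - max (-M) (min (f₀ p) M)|) ^ 2 *
                Real.exp (c * |k p - max (-M) (min (f₀ p) M)|) :=
              phi_le_sq_mul_exp (by positivity)
          _ ≤ (c * |k p - f₀ p|) ^ 2 * Real.exp (c * (2 * M)) := by gcongr
          _ = s⁻¹ ^ 2 * |k p - f₀ p| ^ 2 := by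
              have : Real.exp (c * (2 * M)) = Real.exp (c * M) ^ 2 := by
                rw [← Real.exp_nat_mul]; congr 1; push_cast; ring
              rw [this, hs, inv_inv]; ring
    _ ≤ ENNReal.ofReal (s⁻¹ ^ 2) * ENNReal.ofReal (s ^ 2) := by
        rw [lintegral_const_mul' _ _ ENNReal.ofReal_ne_top]
        gcongr
    _ = 1 := by
        rw [← ENNReal.ofReal_mul (by positivity), ← mul_pow, inv_mul_cancel₀ hs0.ne', one_pow,
          ENNReal.ofReal_one]

/-- Continuous compactly supported functions approximate `h` for all the seminorms
`u ↦ ∫ |u| * |G - 1| dμ`, uniformly over `G ∈ S^N(μ)`. -/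
lemma exists_uniform_approx {h : α → ℝ} (hmeas : Measurable h)
    (hL2 : ∫⁻ p, ENNReal.ofReal (|h p| ^ 2) ∂μ < ⊤)
    (hexp : ∀ δ : ℝ, 0 < δ → ∀ E : Set α, MeasurableSet E → μ E < ⊤ →
      ∫⁻ p in E, ENNReal.ofReal (Real.exp (δ * |h p|)) ∂μ < ⊤) (N : ℕ)
    {ε : ℝ} (hε : 0 < ε) :
    ∃ f : α → ℝ, Continuous f ∧ HasCompactSupport f ∧ ∀ G, MemSN μ N G →
      ∫⁻ p, ENNReal.ofReal (|h p - f p| * |G p - 1|) ∂μ ≤ ENNReal.ofReal ε := by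
  -- With this `c`, each of the two approximation steps costs at most `(N + 1) / c = ε / 2`.
  set c : ℝ := 2 * (N + 1) / ε with hc
  have hc0 : 0 < c := by positivity
  obtain ⟨M, hM⟩ := exists_truncation hmeas (lintegral_phi_lt_top hmeas hL2 hexp hc0)
  set k : α → ℝ := {q | |h q| ≤ (M : ℝ)}.indicator h with hk
  have hkm : Measurable k :=
    hmeas.indicator (measurableSet_le (by fun_prop) measurable_const)
  have hh2 : MemLp h 2 μ := by
    refine ⟨hmeas.aestronglyMeasurable, ?_⟩
    rw [eLpNorm_lt_top_iff_lintegral_rpow_enorm_lt_top (by norm_num) (by norm_num)]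
    convert hL2 using 3 with p
    rw [ENNReal.ofReal_pow (abs_nonneg _), Real.enorm_eq_ofReal_abs]
    norm_num
  have hk2 : MemLp k 2 μ :=
    hh2.indicator (measurableSet_le (by fun_prop) measurable_const)
  have hkM : ∀ p, |k p| ≤ M := fun p => by
    by_cases hp : p ∈ {q | |h q| ≤ (M : ℝ)}
    · rw [hk, Set.indicator_of_mem hp]; exact hp
    · rw [hk, Set.indicator_of_notMem hp]; simp
  obtain ⟨f, hf, hfs, hkf⟩ := exists_compactSupport_approx hk2 hkM hc0
  refine ⟨f, hf, hfs, fun G hG => ?_⟩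
  have hGm := hG.1
  have half : ∀ u : α → ℝ, ∫⁻ p, ENNReal.ofReal (phi (c * |u p|)) ∂μ ≤ 1 →
      ∫⁻ p, ENNReal.ofReal (|u p| * |G p - 1|) ∂μ ≤ ENNReal.ofReal (ε / 2) := fun u hu => by
    refine (hG.lintegral_mul_le u hc0).trans ?_
    calc ENNReal.ofReal c⁻¹ * (N + ∫⁻ p, ENNReal.ofReal (phi (c * |u p|)) ∂μ)
        ≤ ENNReal.ofReal c⁻¹ * (N + 1) := by gcongr
      _ = ENNReal.ofReal (ε / 2) := by
          rw [← ENNReal.ofReal_natCast, ← ENNReal.ofReal_one,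
            ← ENNReal.ofReal_add (by positivity) (by positivity),
            ← ENNReal.ofReal_mul (by positivity), hc]
          congr 1
          field_simp
  calc ∫⁻ p, ENNReal.ofReal (|h p - f p| * |G p - 1|) ∂μ
      ≤ ∫⁻ p, (ENNReal.ofReal (|h p - k p| * |G p - 1|) +
          ENNReal.ofReal (|k p - f p| * |G p - 1|)) ∂μ := by
        refine lintegral_mono fun p => ?_
        rw [← ENNReal.ofReal_add (by positivity) (by positivity), ← add_mul]
        gcongr
        exact abs_sub_le _ _ _
    _ = ∫⁻ p, ENNReal.ofReal (|h p - k p| * |G p - 1|) ∂μ +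
          ∫⁻ p, ENNReal.ofReal (|k p - f p| * |G p - 1|) ∂μ :=
        lintegral_add_left (by fun_prop) _
    _ ≤ ENNReal.ofReal (ε / 2) + ENNReal.ofReal (ε / 2) :=
        add_le_add (half _ hM) (half _ hkf)
    _ = ENNReal.ofReal ε := by
        rw [← ENNReal.ofReal_add (by positivity) (by positivity), add_halves]

end General

/-! ### Passing to the limit -/

lemma integrable_of_lintegral_abs_mul_lt_top {α : Type*} [MeasurableSpace α] {μ : Measure α}
    {u v : α → ℝ} (hu : Measurable u) (hv : Measurable v)
    (huv : ∫⁻ p, ENNReal.ofReal (|u p| * |v p|) ∂μ < ⊤) : Integrable (fun p => u p * v p) μ := by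
  refine ⟨(hu.mul hv).aestronglyMeasurable, ?_⟩
  simpa only [HasFiniteIntegral, Real.enorm_eq_ofReal_abs, abs_mul] using huv

lemma abs_integral_mul_le {α : Type*} [MeasurableSpace α] {μ : Measure α}
    {u v : α → ℝ} {ε : ℝ} (hε : 0 ≤ ε)
    (huv : ∫⁻ p, ENNReal.ofReal (|u p| * |v p|) ∂μ ≤ ENNReal.ofReal ε) :
    |∫ p, u p * v p ∂μ| ≤ ε := by
  have h1 := enorm_integral_le_lintegral_enorm (μ := μ) (fun p => u p * v p)
  simp only [Real.enorm_eq_ofReal_abs, abs_mul] at h1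
  exact (ENNReal.ofReal_le_ofReal_iff hε).1 (h1.trans huv)

/-- If `g_n → g` in `S^N(ν_T)` (in the sense of integration against continuous compactly
supported functions) and `h` is square-integrable with all exponential moments on finite
measure sets, then `∫ h·(g_n − 1) dν_T → ∫ h·(g − 1) dν_T`. -/
theorem lintegral_mul_sub_one_tendsto
    {𝕏 : Type*} [TopologicalSpace 𝕏] [PolishSpace 𝕏] [LocallyCompactSpace 𝕏]
    [MeasurableSpace 𝕏] [BorelSpace 𝕏]
    (ν : Measure 𝕏) [IsFiniteMeasureOnCompacts ν]
    (T : ℝ) (hT : 0 < T) (N : ℕ)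
    (νT : Measure (ℝ × 𝕏)) (hνT : νT = (volume.restrict (Set.Icc (0:ℝ) T)).prod ν)
    (gseq : ℕ → ℝ × 𝕏 → ℝ) (g : ℝ × 𝕏 → ℝ)
    (hgseq : ∀ n, MemSN νT N (gseq n)) (hg : MemSN νT N g)
    (hconv : ∀ f : ℝ × 𝕏 → ℝ, Continuous f → HasCompactSupport f →
      Tendsto (fun n => ∫ p, f p * gseq n p ∂νT) atTop (nhds (∫ p, f p * g p ∂νT)))
    (h : ℝ × 𝕏 → ℝ) (hmeas : Measurable h)
    (hL2 : ∫⁻ p, ENNReal.ofReal (|h p| ^ 2) ∂νT < ⊤)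
    (hexp : ∀ δ : ℝ, 0 < δ → ∀ E : Set (ℝ × 𝕏), MeasurableSet E → νT E < ⊤ →
      ∫⁻ p in E, ENNReal.ofReal (Real.exp (δ * |h p|)) ∂νT < ⊤) :
    Tendsto (fun n => ∫ p, h p * (gseq n p - 1) ∂νT) atTop
      (nhds (∫ p, h p * (g p - 1) ∂νT)) := by
  have : IsFiniteMeasureOnCompacts νT := by rw [hνT]; infer_instance
  have : νT.Regular := by rw [hνT]; infer_instance
  have hhG : ∀ G, MemSN νT N G → Integrable (fun p => h p * (G p - 1)) νT := fun G hG => by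
    refine integrable_of_lintegral_abs_mul_lt_top hmeas (hG.1.sub_const 1) ?_
    refine (hG.lintegral_mul_le h one_pos).trans_lt (ENNReal.mul_lt_top ENNReal.ofReal_lt_top ?_)
    exact ENNReal.add_lt_top.2 ⟨ENNReal.natCast_lt_top N,
      lintegral_phi_lt_top hmeas hL2 hexp one_pos⟩
  rw [Metric.tendsto_atTop]
  intro ε hε
  obtain ⟨f, hf, hfs, hfε⟩ := exists_uniform_approx hmeas hL2 hexp N (ε := ε / 4) (by positivity)
  have hfi : Integrable f νT := hf.integrable_of_hasCompactSupport hfs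
  have hfm : Measurable f := hf.measurable
  have hd : ∀ G, MemSN νT N G → Integrable (fun p => (h p - f p) * (G p - 1)) νT := fun G hG =>
    integrable_of_lintegral_abs_mul_lt_top (hmeas.sub hfm) (hG.1.sub_const 1)
      ((hfε G hG).trans_lt ENNReal.ofReal_lt_top)
  have hfG : ∀ G, MemSN νT N G → Integrable (fun p => f p * G p) νT := fun G hG => by
    refine (((hhG G hG).sub (hd G hG)).add hfi).congr (ae_of_all _ fun p => ?_)
    simp only [Pi.add_apply, Pi.sub_apply]; ring
  have hsplit : ∀ G, MemSN νT N G → ∫ p, h p * (G p - 1) ∂νT =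
      ∫ p, (h p - f p) * (G p - 1) ∂νT + (∫ p, f p * G p ∂νT - ∫ p, f p ∂νT) := fun G hG => by
    have hfG1 : Integrable (fun p => f p * G p - f p) νT := (hfG G hG).sub hfi
    rw [← integral_sub (hfG G hG) hfi, ← integral_add (hd G hG) hfG1]
    exact integral_congr_ae (ae_of_all _ fun p => by ring)
  -- Up to the errors controlled by `hfε`, only `∫ f * G` depends on `G`, and `hconv` handles it.
  obtain ⟨n₀, hn₀⟩ := Metric.tendsto_atTop.1 (hconv f hf hfs) (ε / 4) (by positivity)
  refine ⟨n₀, fun n hn => ?_⟩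
  have h1 := hn₀ n hn
  have h2 := abs_integral_mul_le (by positivity) (hfε _ (hgseq n))
  have h3 := abs_integral_mul_le (by positivity) (hfε _ hg)
  rw [hsplit _ (hgseq n), hsplit _ hg]
  rw [Real.dist_eq, abs_lt] at h1 ⊢
  rw [abs_le] at h2 h3
  constructor <;> linarith
end

section
/- Fix N ∈ ℕ. Let h : [0,T] × 𝕏 → ℝ be measurable with ∫ |h|² dν_T < ∞ and such that for every δ > 0 and every measurable set E ⊆ [0,T] × 𝕏 with ν_T(E) < ∞ one has ∫_E exp(δ·|h|) dν_T < ∞. Then for every ε > 0 there exists a compact set K ⊆ 𝕏 such that sup over g ∈ S^N(ν_T) of ∫_{[0,T]} ∫_{𝕏∖K} |h(s,v)|·|g(s,v) − 1| ν(dv) ds ≤ ε. -/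
/-!
The function `ell` has the Legendre transform `x ↦ exp x - 1`, and on both sides of `r = 1` this gives
the Young-type inequality `x * |r - 1| ≤ ell r + (exp x - 1 - x)` for `x ≥ 0` (`mul_abs_sub_one_le`).
Applied with `x = σ * |h|`, it bounds the integral of `|h| * |g - 1|` over any set `A` by
`σ⁻¹ * (N + ∫_A φ)` with `φ = exp (σ * |h|) - 1 - σ * |h|`, uniformly in `g ∈ S^N`.

For each fixed `σ`, the function `φ` is integrable: where `|h| ≤ 1` it is at most a constant multiple
of `|h| ^ 2`, and the set where `|h| > 1` has finite measure by Chebyshev's inequality, so the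
exponential moment hypothesis applies there. Hence `∫_A φ ≤ 1` when `A` is the complement of a large
enough member of a compact exhaustion (`exists_compact_setLIntegral_compl_le`), and `σ = (N + 1) / ε`
gives the bound `ε`.
-/

open MeasureTheory Filter
open scoped ENNReal

/-- Young's inequality for `ell` and its Legendre transform `y ↦ exp y - 1`. -/
lemma mul_le_ell_add_exp_sub_one {r : ℝ} (hr : 0 ≤ r) (y : ℝ) :
    r * y ≤ ell r + (Real.exp y - 1) := by
  unfold ell
  rcases hr.eq_or_lt with rfl | hr
  · simpa using (Real.exp_pos y).le
  · have h1 := mul_le_mul_of_nonneg_left (Real.add_one_le_exp (y - Real.log r)) hr.le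
    rw [Real.exp_sub, Real.exp_log hr, mul_div_cancel₀ _ hr.ne'] at h1
    linarith

lemma ell_nonneg_s7 {r : ℝ} (hr : 0 ≤ r) : 0 ≤ ell r := by
  simpa using mul_le_ell_add_exp_sub_one hr 0

/-- Young's inequality recentred at the minimum `r = 1` of `ell`. -/
lemma mul_abs_sub_one_le {r x : ℝ} (hr : 0 ≤ r) (hx : 0 ≤ x) :
    x * |r - 1| ≤ ell r + (Real.exp x - 1 - x) := by
  rcases le_total 1 r with h1 | h1
  · rw [abs_of_nonneg (by linarith)]
    linarith [mul_le_ell_add_exp_sub_one hr x]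
  · rw [abs_of_nonpos (by linarith)]
    -- Below `1` the dual variable is `-x`, and `exp (-x) - 1 + x ≤ exp x - 1 - x` as `x ≤ sinh x`.
    have h2 := mul_le_ell_add_exp_sub_one hr (-x)
    have h3 := Real.self_le_sinh_iff.2 hx
    rw [Real.sinh_eq] at h3
    linarith

lemma exp_sub_one_sub_le {x : ℝ} (hx : 0 ≤ x) : Real.exp x - 1 - x ≤ x ^ 2 * Real.exp x := by
  have h1 : Real.exp x - 1 ≤ x * Real.exp x := by
    have h2 := mul_le_mul_of_nonneg_right (Real.add_one_le_exp (-x)) (Real.exp_pos x).le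
    rw [← Real.exp_add, neg_add_cancel, Real.exp_zero] at h2
    linarith
  nlinarith [mul_le_mul_of_nonneg_left h1 hx]

/-- The part of the exponential beyond first order is integrable: it is quadratic where `|h| ≤ 1`,
and the exponential moments control it on the finite-measure set where `|h| > 1`. -/
lemma lintegral_exp_sub_one_sub_lt_top {α : Type*} [MeasurableSpace α] {μ : Measure α}
    {h : α → ℝ} (hmeas : Measurable h)
    (hL2 : ∫⁻ p, ENNReal.ofReal (|h p| ^ 2) ∂μ < ⊤)
    (hexp : ∀ δ : ℝ, 0 < δ → ∀ E : Set α, MeasurableSet E → μ E < ⊤ →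
      ∫⁻ p in E, ENNReal.ofReal (Real.exp (δ * |h p|)) ∂μ < ⊤) {σ : ℝ} (hσ : 0 < σ) :
    ∫⁻ p, ENNReal.ofReal (Real.exp (σ * |h p|) - 1 - σ * |h p|) ∂μ < ⊤ := by
  have hE : MeasurableSet {p | 1 < |h p|} := measurableSet_lt measurable_const hmeas.abs
  have hEfin : μ {p | 1 < |h p|} < ⊤ := by
    refine lt_of_le_of_lt ?_ hL2
    rw [← setLIntegral_one]
    refine (setLIntegral_mono' hE fun p hp => ?_).trans (setLIntegral_le_lintegral _ _)
    have hp' : 1 < |h p| := hp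
    rw [← ENNReal.ofReal_one]
    exact ENNReal.ofReal_le_ofReal (by nlinarith)
  rw [← lintegral_add_compl _ hE]
  refine ENNReal.add_lt_top.2 ⟨lt_of_le_of_lt ?_ (hexp σ hσ _ hE hEfin), ?_⟩
  · refine lintegral_mono fun p => ENNReal.ofReal_le_ofReal ?_
    have := mul_nonneg hσ.le (abs_nonneg (h p))
    linarith
  · calc ∫⁻ p in {p | 1 < |h p|}ᶜ, ENNReal.ofReal (Real.exp (σ * |h p|) - 1 - σ * |h p|) ∂μ
        ≤ ∫⁻ p in {p | 1 < |h p|}ᶜ,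
            ENNReal.ofReal (σ ^ 2 * Real.exp σ) * ENNReal.ofReal (|h p| ^ 2) ∂μ := by
          refine setLIntegral_mono' hE.compl fun p hp => ?_
          have hp' : |h p| ≤ 1 := not_lt.1 hp
          rw [← ENNReal.ofReal_mul (by positivity)]
          refine ENNReal.ofReal_le_ofReal ?_
          calc Real.exp (σ * |h p|) - 1 - σ * |h p|
              ≤ (σ * |h p|) ^ 2 * Real.exp (σ * |h p|) :=
                exp_sub_one_sub_le (by positivity)
            _ ≤ (σ * |h p|) ^ 2 * Real.exp σ := by
                gcongr
                nlinarith
            _ = σ ^ 2 * Real.exp σ * |h p| ^ 2 := by ring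
      _ ≤ ∫⁻ p, ENNReal.ofReal (σ ^ 2 * Real.exp σ) * ENNReal.ofReal (|h p| ^ 2) ∂μ :=
          setLIntegral_le_lintegral _ _
      _ < ⊤ := by
          rw [lintegral_const_mul _ (by fun_prop)]
          exact ENNReal.mul_lt_top ENNReal.ofReal_lt_top hL2

/-- Tightness in the second factor: the measure with density `f` is finite, so by continuity from
above the complements of a compact exhaustion eventually have mass at most `1`. -/
lemma exists_compact_setLIntegral_compl_le {β X : Type*} [MeasurableSpace β]
    [TopologicalSpace X] [T2Space X] [SigmaCompactSpace X] [MeasurableSpace X] [BorelSpace X]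
    {μ : Measure (β × X)} {f : β × X → ℝ≥0∞} (hf : ∫⁻ p, f p ∂μ < ⊤) :
    ∃ K : Set X, IsCompact K ∧ ∫⁻ p in {p : β × X | p.2 ∉ K}, f p ∂μ ≤ 1 := by
  have hm : ∀ n, MeasurableSet {p : β × X | p.2 ∉ compactCovering X n} := fun n =>
    measurable_snd (isCompact_compactCovering X n).measurableSet.compl
  have hfin : μ.withDensity f Set.univ ≠ ⊤ := by
    rw [withDensity_apply _ MeasurableSet.univ, setLIntegral_univ]
    exact hf.ne
  have hlim := tendsto_measure_iInter_atTop (μ := μ.withDensity f)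
    (s := fun n => {p : β × X | p.2 ∉ compactCovering X n})
    (fun n => (hm n).nullMeasurableSet)
    (fun m n hmn p hp hp' => hp (compactCovering_subset X hmn hp'))
    ⟨0, measure_ne_top_of_subset (Set.subset_univ _) hfin⟩
  have hempty : ⋂ n, {p : β × X | p.2 ∉ compactCovering X n} = ∅ := by
    refine Set.eq_empty_of_forall_notMem fun p hp => ?_
    obtain ⟨n, hn⟩ := exists_mem_compactCovering p.2
    exact Set.mem_iInter.1 hp n hn
  rw [hempty, measure_empty] at hlim
  obtain ⟨n, hn⟩ := (hlim.eventually_le_const zero_lt_one).exists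
  refine ⟨compactCovering X n, isCompact_compactCovering X n, ?_⟩
  rwa [Function.comp_apply, withDensity_apply _ (hm n)] at hn

/-- For `h` square-integrable with all exponential moments on finite-measure sets, the
integrals `∫∫ |h|·|g−1|` over the complement of a compact set `K ⊆ 𝕏` can be made
uniformly small over `g ∈ S^N`. -/
theorem exists_compact_sup_lintegral_compl_le
    {𝕏 : Type*} [TopologicalSpace 𝕏] [PolishSpace 𝕏] [LocallyCompactSpace 𝕏]
    [MeasurableSpace 𝕏] [BorelSpace 𝕏]
    (ν : Measure 𝕏) [IsFiniteMeasureOnCompacts ν]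
    (T : ℝ) (hT : 0 < T) (N : ℕ)
    (νT : Measure (ℝ × 𝕏)) (hνT : νT = (volume.restrict (Set.Icc (0:ℝ) T)).prod ν)
    (h : ℝ × 𝕏 → ℝ) (hmeas : Measurable h)
    (hL2 : ∫⁻ p, ENNReal.ofReal (|h p| ^ 2) ∂νT < ⊤)
    (hexp : ∀ δ : ℝ, 0 < δ → ∀ E : Set (ℝ × 𝕏), MeasurableSet E → νT E < ⊤ →
      ∫⁻ p in E, ENNReal.ofReal (Real.exp (δ * |h p|)) ∂νT < ⊤) :
    ∀ ε : ℝ, 0 < ε → ∃ K : Set 𝕏, IsCompact K ∧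
      ∀ g : ℝ × 𝕏 → ℝ, MemSN νT N g →
        ∫⁻ p in {p : ℝ × 𝕏 | p.2 ∉ K}, ENNReal.ofReal (|h p| * |g p - 1|) ∂νT
          ≤ ENNReal.ofReal ε := by
  intro ε hε
  have hσ : 0 < (N + 1 : ℝ) / ε := by positivity
  -- This `σ` makes `σ⁻¹ * (N + 1) = ε`: `N` comes from `∫ ell g`, `1` from the tail integral.
  set σ : ℝ := (N + 1 : ℝ) / ε with hσdef
  obtain ⟨K, hK, hKle⟩ := exists_compact_setLIntegral_compl_le
    (lintegral_exp_sub_one_sub_lt_top hmeas hL2 hexp hσ)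
  refine ⟨K, hK, fun g ⟨hg, hg0, hgN⟩ => ?_⟩
  have hell : Measurable fun p => ENNReal.ofReal (ell (g p)) := by
    unfold ell
    fun_prop
  calc ∫⁻ p in {p : ℝ × 𝕏 | p.2 ∉ K}, ENNReal.ofReal (|h p| * |g p - 1|) ∂νT
      ≤ ∫⁻ p in {p : ℝ × 𝕏 | p.2 ∉ K}, ENNReal.ofReal σ⁻¹ * (ENNReal.ofReal (ell (g p)) +
          ENNReal.ofReal (Real.exp (σ * |h p|) - 1 - σ * |h p|)) ∂νT := by
        refine lintegral_mono fun p => ?_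
        rw [← ENNReal.ofReal_add (ell_nonneg_s7 (hg0 p))
          (by linarith [Real.add_one_le_exp (σ * |h p|)]), ← ENNReal.ofReal_mul (by positivity)]
        refine ENNReal.ofReal_le_ofReal ?_
        rw [inv_mul_eq_div, le_div_iff₀ hσ]
        linarith [mul_abs_sub_one_le (hg0 p) (mul_nonneg hσ.le (abs_nonneg (h p)))]
    _ = ENNReal.ofReal σ⁻¹ * (∫⁻ p in {p : ℝ × 𝕏 | p.2 ∉ K}, ENNReal.ofReal (ell (g p)) ∂νT +
          ∫⁻ p in {p : ℝ × 𝕏 | p.2 ∉ K},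
            ENNReal.ofReal (Real.exp (σ * |h p|) - 1 - σ * |h p|) ∂νT) := by
        rw [lintegral_const_mul' _ _ ENNReal.ofReal_ne_top, lintegral_add_left hell]
    _ ≤ ENNReal.ofReal σ⁻¹ * (N + 1) := by
        gcongr
        exact (setLIntegral_le_lintegral _ _).trans hgN
    _ = ENNReal.ofReal ε := by
        rw [show (N + 1 : ℝ≥0∞) = ENNReal.ofReal (N + 1) by
          rw [ENNReal.ofReal_add (by positivity) zero_le_one, ENNReal.ofReal_natCast,
            ENNReal.ofReal_one], ← ENNReal.ofReal_mul (by positivity)]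
        congr 1
        rw [hσdef]
        field_simp
end
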